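/- arXiv:1609.03373 — 3 statements merged into one kernel-verified Lean document; each statement's English description precedes it below -/
import Mathlib

section
/- Let B be a real n×m matrix such that E := BᵀB is invertible, let P := B E⁻¹ Bᵀ, let H be an invertible real m×m matrix, and set N := B E⁻¹ H E⁻¹ Bᵀ + I − P. Then N (B H⁻¹ Bᵀ + I − P) = I, and consequently N is invertible with N⁻¹ = B H⁻¹ Bᵀ + I − P. -/
/-!
Write `A = B E⁻¹ H E⁻¹ Bᵀ` and `C = B H⁻¹ Bᵀ`. Since `P` is the orthogonal projection onto the
column space of `B`, it satisfies `P B = B` and `Bᵀ P = Bᵀ`, so `A P = A`, `P C = C` and `P² = P`,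
while `Bᵀ B = E` gives `A C = P`. Expanding, `(A + 1 - P) (C + 1 - P) = 1`: the matrices `A` and `C`
are mutually inverse on the range of `P`, and `1 - P` is the identity on its complement.
A one-sided inverse of a square matrix is two-sided, which gives the remaining claims.
-/

open Matrix

/-- Matrix form of the inverse formula in the proof of Lemma 4: with `E := BᵀB` invertible,
`P := B E⁻¹ Bᵀ`, `H` invertible and `N := B E⁻¹ H E⁻¹ Bᵀ + I − P`, one has
`N (B H⁻¹ Bᵀ + I − P) = I`, so `N` is invertible with `N⁻¹ = B H⁻¹ Bᵀ + I − P`. -/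
theorem stmt7 {n m : ℕ} (B : Matrix (Fin n) (Fin m) ℝ)
    (E : Matrix (Fin m) (Fin m) ℝ) (hE : E = Bᵀ * B) (hEunit : IsUnit E)
    (H : Matrix (Fin m) (Fin m) ℝ) (hHunit : IsUnit H)
    (P : Matrix (Fin n) (Fin n) ℝ) (hP : P = B * E⁻¹ * Bᵀ)
    (N : Matrix (Fin n) (Fin n) ℝ)
    (hN : N = B * E⁻¹ * H * E⁻¹ * Bᵀ + 1 - P) :
    N * (B * H⁻¹ * Bᵀ + 1 - P) = 1
    ∧ IsUnit N
    ∧ N⁻¹ = B * H⁻¹ * Bᵀ + 1 - P := by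
  have hEi : E * E⁻¹ = 1 := mul_nonsing_inv E ((isUnit_iff_isUnit_det E).mp hEunit)
  have hiE : E⁻¹ * E = 1 := nonsing_inv_mul E ((isUnit_iff_isUnit_det E).mp hEunit)
  have hHi : H * H⁻¹ = 1 := mul_nonsing_inv H ((isUnit_iff_isUnit_det H).mp hHunit)
  -- `P` fixes the columns of `B` and the rows of `Bᵀ`.
  have hPB : P * B = B := by
    rw [hP, Matrix.mul_assoc, ← hE, Matrix.mul_assoc, hiE, Matrix.mul_one]
  have hBP : Bᵀ * P = Bᵀ := by
    rw [hP, ← Matrix.mul_assoc, ← Matrix.mul_assoc, ← hE, hEi, Matrix.one_mul]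
  have hPP : P * P = P := by
    nth_rewrite 2 [hP]
    rw [← Matrix.mul_assoc, ← Matrix.mul_assoc, hPB, ← hP]
  have hAP : B * E⁻¹ * H * E⁻¹ * Bᵀ * P = B * E⁻¹ * H * E⁻¹ * Bᵀ := by
    rw [Matrix.mul_assoc, hBP]
  have hPC : P * (B * H⁻¹ * Bᵀ) = B * H⁻¹ * Bᵀ := by
    rw [← Matrix.mul_assoc, ← Matrix.mul_assoc, hPB]
  have hAC : B * E⁻¹ * H * E⁻¹ * Bᵀ * (B * H⁻¹ * Bᵀ) = P := by
    calc B * E⁻¹ * H * E⁻¹ * Bᵀ * (B * H⁻¹ * Bᵀ)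
        = B * E⁻¹ * (H * (E⁻¹ * (Bᵀ * B)) * H⁻¹) * Bᵀ := by simp only [Matrix.mul_assoc]
      _ = P := by rw [← hE, hiE, Matrix.mul_one, hHi, Matrix.mul_one, hP]
  have key : N * (B * H⁻¹ * Bᵀ + 1 - P) = 1 := by
    rw [hN]
    -- Hiding the factorizations leaves an identity in the noncommutative ring of matrices.
    generalize B * E⁻¹ * H * E⁻¹ * Bᵀ = A at *
    generalize B * H⁻¹ * Bᵀ = C at *
    simp only [mul_sub, sub_mul, mul_add, add_mul, mul_one, one_mul, hAP, hPC, hAC, hPP]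
    abel
  exact ⟨key, IsUnit.of_mul_eq_one _ key, inv_eq_right_inv key⟩
end

section
/- Let U ⊆ ℝ^m be open, θ ∈ U, and let X̂ : U → ℝ^n be differentiable at θ with B := DX̂(θ) injective; set E := BᵀB, P := B E⁻¹ Bᵀ, let H be an invertible real m×m matrix and N := B E⁻¹ H E⁻¹ Bᵀ + I − P. Then for every w ∈ ℝ^m, N⁻¹ (B E⁻¹ w) = B H⁻¹ w, equivalently N (B H⁻¹ w) = B E⁻¹ w. In particular, for any f̃ : ℝ^n → ℝ differentiable at X̂(θ) with F := f̃ ∘ X̂, one has N⁻¹ (P ∇f̃(X̂(θ))) = B H⁻¹ ∇F(θ). -/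
/-!
Since `B` is injective, the Gram matrix `E = BᵀB` is invertible, so `N B = B E⁻¹ H` and hence
`N (B H⁻¹) = B E⁻¹`. The matrix `N` is invertible with inverse `B H⁻¹ Bᵀ + 1 - P`: on the range of
`B`, `N` acts as `B E⁻¹ H E⁻¹ Bᵀ`, on the orthogonal complement as the identity. This gives both
matrix identities. The gradient identity is the case `w = Bᵀ ∇f(X θ)`, which by the
chain rule (`gradient_comp_eq_transpose_mulVec`) is `∇(f ∘ X)(θ)`.
-/

open Matrix

theorem isUnit_det_gram_of_injective {m n : ℕ} (B : Matrix (Fin n) (Fin m) ℝ)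
    (hB : Function.Injective B.mulVec) : IsUnit (Bᵀ * B).det := by
  have h : (Bᴴ * B).PosDef := Matrix.PosDef.conjTranspose_mul_self B hB
  rw [Matrix.conjTranspose_eq_transpose_of_trivial] at h
  exact isUnit_iff_ne_zero.2 (ne_of_gt h.det_pos)

/-- The chain rule for Euclidean gradients: `∇(f ∘ X)(θ) = DX(θ)ᵀ ∇f(X θ)`. -/
theorem gradient_comp_eq_transpose_mulVec {m n : ℕ}
    {θ : EuclideanSpace ℝ (Fin m)}
    {X : EuclideanSpace ℝ (Fin m) → EuclideanSpace ℝ (Fin n)}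
    (hX : DifferentiableAt ℝ X θ)
    {B : Matrix (Fin n) (Fin m) ℝ}
    (hB : ∀ (μ : EuclideanSpace ℝ (Fin m)) (i : Fin n),
      fderiv ℝ X θ μ i = (B *ᵥ fun j => μ j) i)
    {f : EuclideanSpace ℝ (Fin n) → ℝ} (hf : DifferentiableAt ℝ f (X θ)) :
    (fun j => gradient (f ∘ X) θ j) = Bᵀ *ᵥ fun i => gradient f (X θ) i := by
  funext j
  have h1 : gradient (f ∘ X) θ j
      = inner ℝ (gradient (f ∘ X) θ) (EuclideanSpace.single j (1 : ℝ)) := by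
    rw [EuclideanSpace.inner_single_right]; simp
  have h2 : ∀ i, fderiv ℝ X θ (EuclideanSpace.single j (1 : ℝ)) i = B i j := by
    intro i
    rw [hB]
    simp [Matrix.mulVec, dotProduct]
  rw [h1, gradient, InnerProductSpace.toDual_symm_apply, fderiv_comp θ hf hX,
    ContinuousLinearMap.comp_apply, ← InnerProductSpace.toDual_symm_apply, ← gradient,
    PiLp.inner_apply]
  simp [h2, Matrix.mulVec, dotProduct]

/-- Coordinate/matrix form of Lemma 4: `Ĥ⁻¹ ∇_Γ f = grad_ĥ f`. With `B := DX̂(θ)` injective,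
`E := BᵀB`, `P := B E⁻¹ Bᵀ`, `H` invertible and `N := B E⁻¹ H E⁻¹ Bᵀ + I − P`, one has
`N⁻¹ (B E⁻¹ w) = B H⁻¹ w` (equivalently `N (B H⁻¹ w) = B E⁻¹ w`) for all `w`, and in
particular `N⁻¹ (P ∇f̃(X̂(θ))) = B H⁻¹ ∇F(θ)` for `F := f̃ ∘ X̂`. -/
theorem stmt10 {m n : ℕ}
    (U : Set (EuclideanSpace ℝ (Fin m))) (hU : IsOpen U)
    (θ : EuclideanSpace ℝ (Fin m)) (hθ : θ ∈ U)
    (X : EuclideanSpace ℝ (Fin m) → EuclideanSpace ℝ (Fin n))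
    (hX : DifferentiableAt ℝ X θ)
    (B : Matrix (Fin n) (Fin m) ℝ)
    (hB : ∀ (μ : EuclideanSpace ℝ (Fin m)) (i : Fin n),
      fderiv ℝ X θ μ i = (B *ᵥ fun j => μ j) i)
    (hBinj : Function.Injective (fderiv ℝ X θ))
    (E : Matrix (Fin m) (Fin m) ℝ) (hE : E = Bᵀ * B)
    (P : Matrix (Fin n) (Fin n) ℝ) (hP : P = B * E⁻¹ * Bᵀ)
    (H : Matrix (Fin m) (Fin m) ℝ) (hHunit : IsUnit H)
    (N : Matrix (Fin n) (Fin n) ℝ)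
    (hN : N = B * E⁻¹ * H * E⁻¹ * Bᵀ + 1 - P) :
    (∀ w : Fin m → ℝ, N⁻¹ *ᵥ ((B * E⁻¹) *ᵥ w) = (B * H⁻¹) *ᵥ w)
    ∧ (∀ w : Fin m → ℝ, N *ᵥ ((B * H⁻¹) *ᵥ w) = (B * E⁻¹) *ᵥ w)
    ∧ (∀ f : EuclideanSpace ℝ (Fin n) → ℝ, DifferentiableAt ℝ f (X θ) →
        N⁻¹ *ᵥ (P *ᵥ fun i => gradient f (X θ) i)
          = (B * H⁻¹) *ᵥ fun j => gradient (f ∘ X) θ j) := by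
  have hinj : Function.Injective B.mulVec := by
    intro v w hvw
    have : WithLp.toLp 2 v = (WithLp.toLp 2 w : EuclideanSpace ℝ (Fin m)) := by
      apply hBinj
      ext i
      rw [hB, hB]
      exact congrFun hvw i
    exact congrArg WithLp.ofLp this
  have hEu : IsUnit E.det := hE ▸ isUnit_det_gram_of_injective B hinj
  have hHu : IsUnit H.det := (Matrix.isUnit_iff_isUnit_det H).1 hHunit
  have hNB : N * B = B * E⁻¹ * H := by
    have h : N * B = B * E⁻¹ * H * (E⁻¹ * (Bᵀ * B)) + B - B * (E⁻¹ * (Bᵀ * B)) := by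
      rw [hN, hP]
      simp only [Matrix.add_mul, Matrix.sub_mul, Matrix.one_mul, Matrix.mul_assoc]
    rw [h, ← hE, Matrix.nonsing_inv_mul E hEu]
    simp
  have hNBH : N * (B * H⁻¹) = B * E⁻¹ := by
    rw [← Matrix.mul_assoc, hNB, Matrix.mul_assoc, Matrix.mul_nonsing_inv H hHu, Matrix.mul_one]
  have hNinv : N * (B * H⁻¹ * Bᵀ + 1 - P) = 1 := by
    have hNP : N * P = B * E⁻¹ * H * E⁻¹ * Bᵀ := by
      rw [hP, ← Matrix.mul_assoc, ← Matrix.mul_assoc, hNB]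
    rw [Matrix.mul_sub, Matrix.mul_add, ← Matrix.mul_assoc, hNBH, hNP, ← hP, Matrix.mul_one, hN]
    abel
  have hNu : IsUnit N.det := Matrix.isUnit_det_of_right_inverse hNinv
  have hfirst : N⁻¹ * (B * E⁻¹) = B * H⁻¹ := by
    rw [← hNBH, Matrix.nonsing_inv_mul_cancel_left _ _ hNu]
  refine ⟨fun w => ?_, fun w => ?_, fun f hf => ?_⟩
  · rw [Matrix.mulVec_mulVec, hfirst]
  · rw [Matrix.mulVec_mulVec, hNBH]
  · rw [gradient_comp_eq_transpose_mulVec hX hB hf, hP, ← Matrix.mulVec_mulVec,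
      Matrix.mulVec_mulVec _ N⁻¹, hfirst]
end

section
/- Let U ⊆ ℝ^m be open, let Ŷ : U → ℝ^k be twice continuously differentiable with induced metric ĥ_{ij}(θ) := ∂_iŶ(θ)·∂_jŶ(θ) pointwise invertible (Ŷ an immersion), and let e be a C¹ map from U to symmetric positive definite m×m matrices. Then for every index κ and every θ ∈ U: e^{ιη} ( Γ(ĥ)^κ_{ιη} − Γ(e)^κ_{ιη} ) = ĥ^{κσ} · e^{ιη} ( ∂²_{ιη}Ŷ − Γ(e)^ρ_{ιη} ∂_ρŶ ) · ∂_σŶ, where repeated indices are summed and raised indices denote entries of inverse matrices. In other words, the DeTurck vector field Z^κ = e^{ιη}(Γ(ĥ)^κ_{ιη} − Γ(e)^κ_{ιη}) equals the κ-component of (grad_ĥ Ŷ)ᵀ Δ_e Ŷ. -/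
/-!
The product rule applied to `ĥ_{ij} = ∂_iŶ · ∂_jŶ`, together with the symmetry of second
derivatives, cancels four of the six terms in the Christoffel symbols of the induced metric and
leaves `Γ(ĥ)^κ_{ij} = ĥ^{κσ} ∂²_{ij}Ŷ · ∂_σŶ` (`christoffel_induced`). Moreover
`ĥ^{κσ} ∂_ρŶ · ∂_σŶ = ĥ^{κσ} ĥ_{ρσ} = δ^κ_ρ`, so pairing `Γ(e)^ρ_{ιη} ∂_ρŶ` with `ĥ^{κσ} ∂_σŶ`
gives back `Γ(e)^κ_{ιη}`. Subtracting and contracting with `e^{ιη}` yields the identity.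
-/

open Matrix

/-- Christoffel symbols `Γ(h)^k_{ij} = ½ h^{kl}(∂_i h_{lj} + ∂_j h_{li} − ∂_l h_{ij})`
of a matrix-valued map `h` (repeated index `l` summed). -/
noncomputable def christoffel {m : ℕ} (h : (Fin m → ℝ) → Matrix (Fin m) (Fin m) ℝ)
    (θ : Fin m → ℝ) (k i j : Fin m) : ℝ :=
  (1 / 2) * ∑ l, (h θ)⁻¹ k l *
    (fderiv ℝ (fun θ' => h θ' l j) θ (Pi.single i 1)
      + fderiv ℝ (fun θ' => h θ' l i) θ (Pi.single j 1)
      - fderiv ℝ (fun θ' => h θ' i j) θ (Pi.single l 1))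

/-- Schwarz's theorem for the iterated partial derivatives of a `C²` map. -/
lemma second_partial_comm {m k : ℕ} {Y : (Fin m → ℝ) → (Fin k → ℝ)} {θ : Fin m → ℝ}
    (hY : ContDiffAt ℝ 2 Y θ) (v w : Fin m → ℝ) :
    fderiv ℝ (fun θ' => fderiv ℝ Y θ' v) θ w = fderiv ℝ (fun θ' => fderiv ℝ Y θ' w) θ v := by
  have hd : DifferentiableAt ℝ (fderiv ℝ Y) θ :=
    (hY.fderiv_right (m := 1) (by norm_num)).differentiableAt (by norm_num)
  have key : ∀ v w : Fin m → ℝ,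
      fderiv ℝ (fun θ' => fderiv ℝ Y θ' v) θ w = fderiv ℝ (fderiv ℝ Y) θ w v := by
    intro v w
    rw [fderiv_clm_apply hd (differentiableAt_const v)]
    simp
  rw [key, key]
  exact (hY.isSymmSndFDerivAt (by simp)) w v

/-- Product rule for the Euclidean inner product of two directional derivatives. -/
lemma fderiv_induced_metric {m k : ℕ} {Y : (Fin m → ℝ) → (Fin k → ℝ)} {θ : Fin m → ℝ}
    (hY : ContDiffAt ℝ 2 Y θ) (u v w : Fin m → ℝ) :
    fderiv ℝ (fun θ' => ∑ a, fderiv ℝ Y θ' u a * fderiv ℝ Y θ' v a) θ w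
      = ∑ a, (fderiv ℝ (fun θ' => fderiv ℝ Y θ' u) θ w a * fderiv ℝ Y θ v a
          + fderiv ℝ (fun θ' => fderiv ℝ Y θ' v) θ w a * fderiv ℝ Y θ u a) := by
  have hd : DifferentiableAt ℝ (fderiv ℝ Y) θ :=
    (hY.fderiv_right (m := 1) (by norm_num)).differentiableAt (by norm_num)
  have hc : ∀ (u : Fin m → ℝ) (a : Fin k), HasFDerivAt (fun θ' => fderiv ℝ Y θ' u a)
      ((ContinuousLinearMap.proj a).comp (fderiv ℝ (fun θ' => fderiv ℝ Y θ' u) θ)) θ := by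
    intro u a
    exact hasFDerivAt_pi'.1
      (hd.clm_apply (differentiableAt_const u)).hasFDerivAt a
  have h := HasFDerivAt.fun_sum (u := Finset.univ) fun a _ => (hc u a).fun_mul (hc v a)
  rw [HasFDerivAt.fderiv h]
  simp only [_root_.sum_apply, _root_.add_apply,
    _root_.smul_apply, ContinuousLinearMap.comp_apply,
    ContinuousLinearMap.proj_apply, smul_eq_mul]
  exact Finset.sum_congr rfl fun a _ => by ring

/-- The Christoffel symbols of an induced metric: `Γ(ĥ)^κ_{ij} = ĥ^{κσ} ∂²_{ij}Ŷ · ∂_σŶ`. -/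
lemma christoffel_induced {m k : ℕ} {Y : (Fin m → ℝ) → (Fin k → ℝ)} {θ : Fin m → ℝ}
    (hY : ContDiffAt ℝ 2 Y θ) (hhat : (Fin m → ℝ) → Matrix (Fin m) (Fin m) ℝ)
    (hhhat : ∀ (θ : Fin m → ℝ) (i j : Fin m), hhat θ i j
      = ∑ a, fderiv ℝ Y θ (Pi.single i 1) a * fderiv ℝ Y θ (Pi.single j 1) a)
    (κ i j : Fin m) :
    christoffel hhat θ κ i j = ∑ σ, (hhat θ)⁻¹ κ σ *
      ∑ a, fderiv ℝ (fun θ' => fderiv ℝ Y θ' (Pi.single j 1)) θ (Pi.single i 1) a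
        * fderiv ℝ Y θ (Pi.single σ 1) a := by
  unfold christoffel
  rw [Finset.mul_sum]
  refine Finset.sum_congr rfl fun l _ => ?_
  simp only [hhhat _ l j, hhhat _ l i, hhhat _ i j, fderiv_induced_metric hY]
  rw [second_partial_comm hY (Pi.single l 1) (Pi.single i 1),
    second_partial_comm hY (Pi.single l 1) (Pi.single j 1),
    second_partial_comm hY (Pi.single i 1) (Pi.single j 1), mul_left_comm]
  congr 1
  rw [← Finset.sum_add_distrib, ← Finset.sum_sub_distrib, Finset.mul_sum]
  exact Finset.sum_congr rfl fun a _ => by ring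

/-- Central computation in the proof of Proposition 3: for an immersion `Ŷ : U → ℝ^k` with
induced metric `ĥ_{ij} = ∂_iŶ · ∂_jŶ` pointwise invertible, and `e` a C¹ family of symmetric
positive definite matrices, the DeTurck vector field satisfies
`e^{ιη}(Γ(ĥ)^κ_{ιη} − Γ(e)^κ_{ιη}) = ĥ^{κσ} · (e^{ιη}(∂²_{ιη}Ŷ − Γ(e)^ρ_{ιη}∂_ρŶ)) · ∂_σŶ`,
i.e. `Z = (grad_ĥ Ŷ)ᵀ Δ_e Ŷ`. -/
theorem stmt13 {m k : ℕ}
    (U : Set (Fin m → ℝ)) (hU : IsOpen U)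
    (Y : (Fin m → ℝ) → (Fin k → ℝ)) (hY : ContDiffOn ℝ 2 Y U)
    (hhat : (Fin m → ℝ) → Matrix (Fin m) (Fin m) ℝ)
    (hhhat : ∀ (θ : Fin m → ℝ) (i j : Fin m), hhat θ i j
      = ∑ a, fderiv ℝ Y θ (Pi.single i 1) a * fderiv ℝ Y θ (Pi.single j 1) a)
    (hImm : ∀ θ ∈ U, IsUnit (hhat θ))
    (e : (Fin m → ℝ) → Matrix (Fin m) (Fin m) ℝ)
    (heC1 : ∀ i j : Fin m, ContDiffOn ℝ 1 (fun θ => e θ i j) U)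
    (heSymPD : ∀ θ ∈ U, (e θ).IsSymm ∧ (e θ).PosDef) :
    ∀ θ ∈ U, ∀ κ : Fin m,
      ∑ ι, ∑ η, (e θ)⁻¹ ι η *
          (christoffel hhat θ κ ι η - christoffel e θ κ ι η)
        = ∑ σ, (hhat θ)⁻¹ κ σ *
            ∑ a, (∑ ι, ∑ η, (e θ)⁻¹ ι η *
                (fderiv ℝ (fun θ' => fderiv ℝ Y θ' (Pi.single η 1)) θ (Pi.single ι 1) a
                  - ∑ ρ, christoffel e θ ρ ι η * fderiv ℝ Y θ (Pi.single ρ 1) a))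
              * fderiv ℝ Y θ (Pi.single σ 1) a := by
  intro θ hθ κ
  have hYθ : ContDiffAt ℝ 2 Y θ := hY.contDiffAt (hU.mem_nhds hθ)
  have hdelta : ∀ ρ, ∑ σ, (hhat θ)⁻¹ κ σ *
      ∑ a, fderiv ℝ Y θ (Pi.single ρ 1) a * fderiv ℝ Y θ (Pi.single σ 1) a
        = (1 : Matrix (Fin m) (Fin m) ℝ) κ ρ := by
    intro ρ
    rw [← Matrix.nonsing_inv_mul (hhat θ) ((Matrix.isUnit_iff_isUnit_det _).1 (hImm θ hθ)),
      Matrix.mul_apply]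
    refine Finset.sum_congr rfl fun σ _ => ?_
    rw [hhhat θ σ ρ]
    simp only [mul_comm]
  have hterm : ∀ ι η, christoffel hhat θ κ ι η - christoffel e θ κ ι η
      = ∑ σ, (hhat θ)⁻¹ κ σ * ∑ a,
          (fderiv ℝ (fun θ' => fderiv ℝ Y θ' (Pi.single η 1)) θ (Pi.single ι 1) a
            - ∑ ρ, christoffel e θ ρ ι η * fderiv ℝ Y θ (Pi.single ρ 1) a)
          * fderiv ℝ Y θ (Pi.single σ 1) a := by
    intro ι η
    have he : christoffel e θ κ ι η = ∑ σ, (hhat θ)⁻¹ κ σ * ∑ a,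
        (∑ ρ, christoffel e θ ρ ι η * fderiv ℝ Y θ (Pi.single ρ 1) a)
          * fderiv ℝ Y θ (Pi.single σ 1) a := by
      calc christoffel e θ κ ι η
          = ∑ ρ, christoffel e θ ρ ι η * (1 : Matrix (Fin m) (Fin m) ℝ) κ ρ := by
            simp [Matrix.one_apply]
        _ = ∑ ρ, ∑ σ, ∑ a, (hhat θ)⁻¹ κ σ * (christoffel e θ ρ ι η
              * fderiv ℝ Y θ (Pi.single ρ 1) a * fderiv ℝ Y θ (Pi.single σ 1) a) := by
            refine Finset.sum_congr rfl fun ρ _ => ?_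
            rw [← hdelta ρ]
            simp only [Finset.mul_sum]
            exact Finset.sum_congr rfl fun σ _ => Finset.sum_congr rfl fun a _ => by ring
        _ = _ := by
            rw [Finset.sum_comm]
            refine Finset.sum_congr rfl fun σ _ => ?_
            rw [Finset.sum_comm]
            simp only [Finset.mul_sum, Finset.sum_mul]
    rw [he, christoffel_induced hYθ hhat hhhat, ← Finset.sum_sub_distrib]
    simp only [← mul_sub, ← Finset.sum_sub_distrib, ← sub_mul]
  simp only [hterm]
  -- Both sides are now the same fourfold sum, up to the order of summation.
  generalize fderiv ℝ Y θ = D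
  simp only [Finset.sum_mul]
  calc _ = ∑ ι, ∑ σ, ∑ η, (e θ)⁻¹ ι η * ((hhat θ)⁻¹ κ σ * ∑ a,
          (fderiv ℝ (fun θ' => fderiv ℝ Y θ' (Pi.single η 1)) θ (Pi.single ι 1) a
            - ∑ ρ, christoffel e θ ρ ι η * D (Pi.single ρ 1) a)
          * D (Pi.single σ 1) a) :=
        Finset.sum_congr rfl fun ι _ => by
          simp only [Finset.mul_sum (Finset.univ : Finset (Fin m)) _ ((e θ)⁻¹ ι _)]
          exact Finset.sum_comm
    _ = _ := by
        rw [Finset.sum_comm]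
        refine Finset.sum_congr rfl fun σ _ => ?_
        rw [Finset.sum_comm (s := (Finset.univ : Finset (Fin k))), Finset.mul_sum]
        refine Finset.sum_congr rfl fun ι _ => ?_
        rw [Finset.sum_comm (s := (Finset.univ : Finset (Fin k))), Finset.mul_sum]
        refine Finset.sum_congr rfl fun η _ => ?_
        rw [mul_left_comm, Finset.mul_sum (a := (e θ)⁻¹ ι η)]
        simp only [mul_assoc]
end
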